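/- Let x : Fin 4 → (Fin 4 → Fin 3) be defined by x a b = 1 if b = a and x a b = 0 otherwise, and let H = {x a : a ∈ Fin 4} be the corresponding four-card hand. Then every permutation of H is a symmetry of H: for every bijection σ : Fin 4 → Fin 4, there exist a permutation ψ of Fin 4 and a family θ : Fin 4 → Equiv.Perm (Fin 3) whose induced deck map sends x a to x (σ a) for every a. In particular, H has exactly 24 symmetries. -/

import Mathlib

/-- A card of the SET deck: four attributes, each with three values. -/
abbrev Card := Fin 4 → Fin 3

/-- The deck map induced by a permutation `ψ` of attributes and a family `θ` of value
permutations: it sends a card `x` to the card `y` with `y (ψ a) = θ a (x a)` for all `a`. -/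
def deckMap (ψ : Equiv.Perm (Fin 4)) (θ : Fin 4 → Equiv.Perm (Fin 3)) (x : Card) : Card :=
  fun b => θ (ψ.symm b) (x (ψ.symm b))

/-- The four cards `x a`, where `x a b = 1` if `b = a` and `x a b = 0` otherwise. -/
def x (a : Fin 4) : Card := fun b => if b = a then 1 else 0

/-- The four-card hand `{x a : a ∈ Fin 4}`. -/
def H : Finset Card := Finset.univ.image x

open Equiv Function Nat

section Deck

variable {ι V : Type*}

/-- The induced deck map for an arbitrary set `ι` of attributes and an arbitrary set `V` of
values, as a permutation of the deck `ι → V`. -/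
def deckPerm (ψ : Perm ι) (θ : ι → Perm V) : Perm (ι → V) :=
  (Equiv.piCongrRight θ).trans (ψ.arrowCongr (Equiv.refl V))

theorem deckPerm_apply (ψ : Perm ι) (θ : ι → Perm V) (c : ι → V) (b : ι) :
    deckPerm ψ θ c b = θ (ψ.symm b) (c (ψ.symm b)) :=
  rfl

/-- A self-map of a hand `S` is a symmetry if it is the restriction of an induced deck map.
Bijectivity is not part of the definition: for a finite hand it is automatic. -/
def IsSymmetry (S : Finset (ι → V)) (g : S → S) : Prop :=
  ∃ (ψ : Perm ι) (θ : ι → Perm V), ∀ z : S, (g z : ι → V) = deckPerm ψ θ z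

theorem IsSymmetry.bijective {S : Finset (ι → V)} {g : S → S} (hg : IsSymmetry S g) :
    Bijective g := by
  obtain ⟨ψ, θ, hg⟩ := hg
  refine Finite.injective_iff_bijective.mp fun z w hzw => Subtype.ext ?_
  exact (deckPerm ψ θ).injective (by rw [← hg, ← hg, hzw])

variable [DecidableEq ι]

/-- The card with value `u` at the attribute `a` and value `v` at every other attribute. -/
def markedCard (u v : V) (a : ι) : ι → V := fun b => if b = a then u else v

theorem deckPerm_one_markedCard (σ : Perm ι) (u v : V) (a : ι) :
    deckPerm σ 1 (markedCard u v a) = markedCard u v (σ a) := by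
  funext b
  simp [deckPerm_apply, markedCard, Equiv.symm_apply_eq]

theorem markedCard_injective {u v : V} (huv : u ≠ v) : Injective (markedCard (ι := ι) u v) := by
  intro a b hab
  by_contra hne
  exact huv (by simpa [markedCard, hne] using congrFun hab a)

variable [Fintype ι] [DecidableEq V]

variable (ι) in
/-- The hand of all cards `markedCard u v a`, one for each attribute `a`. -/
def markedHand (u v : V) : Finset (ι → V) :=
  Finset.univ.image (markedCard u v)

variable {u v : V}

/-- The cards of a marked hand correspond to the attributes they mark. -/
noncomputable def markedHandEquiv (huv : u ≠ v) : ι ≃ markedHand ι u v :=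
  (Equiv.ofInjective _ (markedCard_injective huv)).trans
    (Equiv.subtypeEquivRight fun _ => by simp [markedHand])

theorem coe_markedHandEquiv (huv : u ≠ v) (a : ι) :
    (markedHandEquiv huv a : ι → V) = markedCard u v a :=
  rfl

theorem isSymmetry_markedHand_of_perm (huv : u ≠ v) (e : Perm (markedHand ι u v)) :
    IsSymmetry (markedHand ι u v) e := by
  let toHand : ι ≃ markedHand ι u v := markedHandEquiv huv
  refine ⟨toHand.symm.permCongr e, 1, toHand.surjective.forall.mpr fun a => ?_⟩
  calc (e (toHand a) : ι → V)
      = toHand (toHand.symm.permCongr e a) := by simp [Equiv.permCongr_apply]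
    _ = deckPerm (toHand.symm.permCongr e) 1 (toHand a) := by
        rw [coe_markedHandEquiv, coe_markedHandEquiv, deckPerm_one_markedCard]

theorem isSymmetry_markedHand_iff_bijective (huv : u ≠ v)
    {g : markedHand ι u v → markedHand ι u v} :
    IsSymmetry (markedHand ι u v) g ↔ Bijective g :=
  ⟨IsSymmetry.bijective, fun hg => isSymmetry_markedHand_of_perm huv (Equiv.ofBijective g hg)⟩

theorem all_permutations_are_symmetries_general (huv : u ≠ v) :
    (∀ σ : Perm ι, ∃ (ψ : Perm ι) (θ : ι → Perm V),
      ∀ a, deckPerm ψ θ (markedCard u v a) = markedCard u v (σ a)) ∧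
    Nat.card {g : markedHand ι u v → markedHand ι u v // IsSymmetry (markedHand ι u v) g} =
      (Fintype.card ι)! := by
  refine ⟨fun σ => ⟨σ, 1, deckPerm_one_markedCard σ u v⟩, ?_⟩
  simp_rw [isSymmetry_markedHand_iff_bijective huv]
  rw [Nat.card_congr bijectiveEquiv, Nat.card_perm, ← Nat.card_congr (markedHandEquiv huv),
    Nat.card_eq_fintype_card]

end Deck

/-- Every permutation of the hand `H` is a symmetry of `H`: for every bijection `σ` of
`Fin 4`, some induced deck map sends `x a` to `x (σ a)` for every `a`.  In particular,
`H` has exactly 24 symmetries (permutations of `H` obtained by restricting induced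
deck maps). -/
theorem all_permutations_are_symmetries :
    (∀ σ : Equiv.Perm (Fin 4),
      ∃ (ψ : Equiv.Perm (Fin 4)) (θ : Fin 4 → Equiv.Perm (Fin 3)),
        ∀ a : Fin 4, deckMap ψ θ (x a) = x (σ a)) ∧
    Nat.card {g : {c : Card // c ∈ H} → {c : Card // c ∈ H} //
      ∃ (ψ : Equiv.Perm (Fin 4)) (θ : Fin 4 → Equiv.Perm (Fin 3)),
        ∀ z : {c : Card // c ∈ H}, (g z : Card) = deckMap ψ θ (z : Card)} = 24 :=
  -- `x`, `H`, `deckMap` are definitionally `markedCard 1 0`, `markedHand (Fin 4) 1 0`, `deckPerm`.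
  all_permutations_are_symmetries_general (ι := Fin 4) (one_ne_zero (α := Fin 3))
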